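/- arXiv:2009.10240 — 7 statements merged into one kernel-verified Lean document; each statement's English description precedes it below -/
import Mathlib

section
/- Let P be a normal program over a set A of propositional atoms and let (P_b, P_t) be a splitting of P. If I_b ⊆ A is an answer set of P_b and J ⊆ A is an answer set of the program P_t ∪ I_b, then J is an answer set of P. -/
/-- A rule of a normal logic program: a head (`none` represents `⊥`, i.e. a
constraint), a finite set of positive body atoms and a finite set of negated
body atoms.  The type `α` is the set of propositional atoms. -/
structure NRule (α : Type*) where
  head : Option α
  pos : Finset α
  neg : Finset α

namespace NRule

/-- The atoms occurring (in the head or in the body) of a rule. -/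
def atoms {α : Type*} (r : NRule α) : Set α :=
  {a | r.head = some a} ∪ ↑r.pos ∪ ↑r.neg

end NRule

/-- A normal program is a set of rules. -/
abbrev NProgram (α : Type*) := Set (NRule α)

/-- A rule survives into (and is kept, with its negative body removed, in) the
reduct `P^I` iff its negated body is disjoint from `I`. -/
def InReduct {α : Type*} (I : Set α) (r : NRule α) : Prop :=
  ∀ a ∈ r.neg, a ∉ I

/-- `J` is closed under the (positive parts of the) atom-headed rules of the
reduct `P^I`: whenever such a rule has its positive body inside `J`, its head
atom is in `J`. -/
def ClosedUnder {α : Type*} (P : NProgram α) (I J : Set α) : Prop :=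
  ∀ r ∈ P, InReduct I r → ∀ a : α, r.head = some a → ↑r.pos ⊆ J → a ∈ J

/-- `I` is an answer set of `P`: (i) `I` is the least set closed under the
atom-headed rules of the reduct `P^I`, and (ii) no `⊥`-headed rule of the
reduct `P^I` has its positive body inside `I`. -/
def IsAnswerSet {α : Type*} (P : NProgram α) (I : Set α) : Prop :=
  (ClosedUnder P I I ∧ ∀ J : Set α, ClosedUnder P I J → I ⊆ J) ∧
    ¬ ∃ r ∈ P, InReduct I r ∧ r.head = none ∧ ↑r.pos ⊆ I

/-- A set `S` of atoms identified with the set of facts `{a ← . : a ∈ S}`. -/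
def facts {α : Type*} (S : Set α) : NProgram α :=
  {r | ∃ a ∈ S, r = ⟨some a, ∅, ∅⟩}

/-- `(Pb, Pt)` is a splitting (of `Pb ∪ Pt`): no atom occurring in `Pb` is the
head of a rule of `Pt`. -/
def IsSplitting {α : Type*} (Pb Pt : NProgram α) : Prop :=
  ∀ a : α, (∃ r ∈ Pb, a ∈ r.atoms) → ¬ ∃ r ∈ Pt, r.head = some a

/-- splitting theorem, upward direction.  If `(Pb, Pt)` is a
splitting of `P = Pb ∪ Pt`, `Ib` is an answer set of `Pb`, and `J` is an answer
set of `Pt ∪ Ib` (with `Ib` viewed as a set of facts), then `J` is an answer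
set of `P`. -/
theorem answerSet_of_splitting {α : Type*} (P Pb Pt : NProgram α) (Ib J : Set α)
    (hP : P = Pb ∪ Pt) (hsplit : IsSplitting Pb Pt)
    (hIb : IsAnswerSet Pb Ib) (hJ : IsAnswerSet (Pt ∪ facts Ib) J) :
    IsAnswerSet P J := by
  subst hP
  obtain ⟨⟨hbc, hbm⟩, hbn⟩ := hIb
  obtain ⟨⟨hjc, hjm⟩, hjn⟩ := hJ
  have hsub : Ib ⊆ J := by
    intro a ha
    exact hjc ⟨some a, ∅, ∅⟩ (Or.inr ⟨a, ha, rfl⟩) (by intro x hx; simp at hx) a rfl (by simp)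
  have key : ∀ a, (∃ r ∈ Pb, a ∈ r.atoms) → a ∈ J → a ∈ Ib := by
    intro a ha haJ
    have hc : ClosedUnder (Pt ∪ facts Ib) J {x | x ∈ J ∧ ((∃ r ∈ Pb, x ∈ r.atoms) → x ∈ Ib)} := by
      intro r hr hred x hx hpos
      refine ⟨hjc r hr hred x hx (fun y hy => (hpos hy).1), fun hxa => ?_⟩
      rcases hr with hr | ⟨b, hb, rfl⟩
      · exact absurd ⟨r, hr, hx⟩ (hsplit x hxa)
      · cases hx
        exact hb
    exact (hjm _ hc haJ).2 ha
  have hpos : ∀ r ∈ Pb, (↑r.pos : Set α) ⊆ J → (↑r.pos : Set α) ⊆ Ib := by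
    intro r hr h x hx
    exact key x ⟨r, hr, Or.inl (Or.inr hx)⟩ (h hx)
  have hred1 : ∀ r ∈ Pb, InReduct J r → InReduct Ib r :=
    fun r _ h x hx hxI => h x hx (hsub hxI)
  have hred2 : ∀ r ∈ Pb, InReduct Ib r → InReduct J r :=
    fun r hr h x hx hxJ => h x hx (key x ⟨r, hr, Or.inr hx⟩ hxJ)
  refine ⟨⟨?_, ?_⟩, ?_⟩
  · rintro r (hr | hr) hred a ha hp
    · exact hsub (hbc r hr (hred1 r hr hred) a ha (hpos r hr hp))
    · exact hjc r (Or.inl hr) hred a ha hp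
  · intro K hK
    have hIK : Ib ⊆ K := hbm K (fun r hr hred a ha hp =>
      hK r (Or.inl hr) (hred2 r hr hred) a ha hp)
    apply hjm
    rintro r (hr | ⟨b, hb, rfl⟩) hred a ha hp
    · exact hK r (Or.inr hr) hred a ha hp
    · cases ha
      exact hIK hb
  · rintro ⟨r, hr | hr, hred, hh, hp⟩
    · exact hbn ⟨r, hr, hred1 r hr hred, hh, hpos r hr hp⟩
    · exact hjn ⟨r, Or.inl hr, hred, hh, hp⟩
end

section
/- Let P be a normal program over a set A of propositional atoms and let (P_b, P_t) be a splitting of P. If I ⊆ A is an answer set of P, then there exists an answer set I_b of P_b such that I is an answer set of the program P_t ∪ I_b. -/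
/-- splitting theorem, downward direction.  If `(Pb, Pt)` is a
splitting of `P = Pb ∪ Pt` and `I` is an answer set of `P`, then there is an
answer set `Ib` of `Pb` such that `I` is an answer set of `Pt ∪ Ib` (with `Ib`
viewed as a set of facts). -/
theorem exists_bottom_answerSet_of_splitting {α : Type*} (P Pb Pt : NProgram α) (I : Set α)
    (hP : P = Pb ∪ Pt) (hsplit : IsSplitting Pb Pt)
    (hI : IsAnswerSet P I) :
    ∃ Ib : Set α, IsAnswerSet Pb Ib ∧ IsAnswerSet (Pt ∪ facts Ib) I := by
  subst hP
  obtain ⟨⟨hc, hmin⟩, hno⟩ := hI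
  have hpos : ∀ r ∈ Pb, ∀ a ∈ r.pos, ∃ r ∈ Pb, a ∈ r.atoms := fun r hr a ha =>
    ⟨r, hr, Or.inl (Or.inr ha)⟩
  have hneg : ∀ r ∈ Pb, ∀ a ∈ r.neg, ∃ r ∈ Pb, a ∈ r.atoms := fun r hr a ha =>
    ⟨r, hr, Or.inr ha⟩
  have hhead : ∀ r ∈ Pb, ∀ a, r.head = some a → ∃ r ∈ Pb, a ∈ r.atoms := fun r hr a ha =>
    ⟨r, hr, Or.inl (Or.inl ha)⟩
  have hred : ∀ r ∈ Pb, InReduct {a | a ∈ I ∧ ∃ r ∈ Pb, a ∈ r.atoms} r → InReduct I r :=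
    fun r hr h a ha haI => h a ha ⟨haI, hneg r hr a ha⟩
  refine ⟨{a | a ∈ I ∧ ∃ r ∈ Pb, a ∈ r.atoms}, ⟨⟨?_, ?_⟩, ?_⟩, ⟨⟨?_, ?_⟩, ?_⟩⟩
  · intro r hr hR a ha hp
    exact ⟨hc r (Or.inl hr) (hred r hr hR) a ha (fun x hx => (hp hx).1), hhead r hr a ha⟩
  · intro J hJ a ha
    have hK : I ⊆ {a | (∃ r ∈ Pb, a ∈ r.atoms) → a ∈ J} := by
      apply hmin
      rintro r (hr | hr) hR b hb hp
      · intro _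
        exact hJ r hr (fun x hx hxI => hR x hx hxI.1) b hb
          (fun x hx => hp hx (hpos r hr x hx))
      · intro hB
        exact absurd ⟨r, hr, hb⟩ (hsplit b hB)
    exact hK ha.1 ha.2
  · rintro ⟨r, hr, hR, hn, hp⟩
    exact hno ⟨r, Or.inl hr, hred r hr hR, hn, fun x hx => (hp hx).1⟩
  · rintro r (hr | ⟨b, hb, rfl⟩) hR a ha hp
    · exact hc r (Or.inr hr) hR a ha hp
    · cases ha
      exact hb.1
  · intro J hJ
    have hK : I ⊆ J ∩ I := by
      apply hmin
      rintro r hr hR b hb hp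
      have hbI : b ∈ I := hc r hr hR b hb (fun x hx => (hp hx).2)
      refine ⟨?_, hbI⟩
      rcases hr with hr | hr
      · exact hJ ⟨some b, ∅, ∅⟩ (Or.inr ⟨b, ⟨hbI, hhead r hr b hb⟩, rfl⟩)
          (fun x hx => by simp at hx) b rfl (by simp)
      · exact hJ r (Or.inl hr) hR b hb (fun x hx => (hp hx).1)
    exact fun a ha => (hK ha).1
  · rintro ⟨r, hr | ⟨b, hb, rfl⟩, hR, hn, hp⟩
    · exact hno ⟨r, Or.inr hr, hR, hn, hp⟩
    · cases hn
end

section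
/- Let P be a normal program over a set A of propositional atoms, let (r_z)_{z∈Z} be a family of pairwise distinct rules of P, let (D_z)_{z∈Z} be a family of subsets of A such that pos(r_z) ∩ D_z ≠ ∅ for every z ∈ Z, and let (f_z)_{z∈Z} be pairwise distinct fresh atoms not belonging to A. Let P′ be the program over A ∪ {f_z : z ∈ Z} obtained from P by replacing each rule r_z by the rule with the same head, positive body pos(r_z) ∪ {f_z}, and negated body neg(r_z), and by adding, for every z ∈ Z and every d ∈ D_z, the rule f_z ← d. Then a set J ⊆ A ∪ {f_z : z ∈ Z} is an answer set of P′ if and only if J ∩ A is an answer set of P and, for every z ∈ Z, f_z ∈ J exactly when (J ∩ A) ∩ D_z ≠ ∅. In particular, P and P′ have the same answer sets modulo the atoms f_z. -/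
/-- propositional projection rewriting.  Let `P` be a normal
program whose rules use only atoms from `A`, `(r z)` a family of pairwise
distinct rules of `P`, `(D z)` a family of subsets of `A` with
`pos (r z) ∩ D z ≠ ∅`, and `(f z)` pairwise distinct fresh atoms not in `A`.
Let `P'` be obtained from `P` by replacing each rule `r z` by the rule with the
same head, positive body `pos (r z) ∪ {f z}` and negated body `neg (r z)`, and
adding the rule `f z ← d` for every `z` and every `d ∈ D z`.  Then
`J ⊆ A ∪ {f z : z}` is an answer set of `P'` iff `J ∩ A` is an answer set of
`P` and, for every `z`, `f z ∈ J` exactly when `(J ∩ A) ∩ D z ≠ ∅`. -/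
theorem projection_rewriting_answerSets {α Z : Type*} [DecidableEq α]
    (A : Set α) (P : NProgram α) (hPA : ∀ r ∈ P, r.atoms ⊆ A)
    (r : Z → NRule α) (hrP : ∀ z, r z ∈ P) (hrinj : Function.Injective r)
    (D : Z → Set α) (hDA : ∀ z, D z ⊆ A)
    (hDpos : ∀ z, (↑(r z).pos ∩ D z).Nonempty)
    (f : Z → α) (hfinj : Function.Injective f) (hfA : ∀ z, f z ∉ A)
    (P' : NProgram α)
    (hP' : P' =
      (P \ Set.range r)
        ∪ Set.range (fun z => (⟨(r z).head, insert (f z) (r z).pos, (r z).neg⟩ : NRule α))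
        ∪ {r' | ∃ z, ∃ d ∈ D z, r' = ⟨some (f z), {d}, ∅⟩}) :
    ∀ J ⊆ A ∪ Set.range f,
      (IsAnswerSet P' J ↔
        IsAnswerSet P (J ∩ A) ∧ ∀ z, (f z ∈ J ↔ (J ∩ A ∩ D z).Nonempty)) := by
  intro J hJ
  have hpos : ∀ s ∈ P, ∀ a ∈ s.pos, a ∈ A := fun s hs a ha =>
    hPA s hs (Or.inl (Or.inr (Finset.mem_coe.2 ha)))
  have hneg : ∀ s ∈ P, ∀ a ∈ s.neg, a ∈ A := fun s hs a ha =>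
    hPA s hs (Or.inr (Finset.mem_coe.2 ha))
  have hhead : ∀ s ∈ P, ∀ a, s.head = some a → a ∈ A := fun s hs a ha =>
    hPA s hs (Or.inl (Or.inl ha))
  have hred : ∀ s ∈ P, (InReduct (J ∩ A) s ↔ InReduct J s) := by
    intro s hs
    constructor
    · intro h a ha haJ
      exact h a ha ⟨haJ, hneg s hs a ha⟩
    · intro h a ha haJ
      exact h a ha haJ.1
  have m1 : ∀ s ∈ P, s ∉ Set.range r → s ∈ P' := by
    intro s hs hn
    rw [hP']
    exact Or.inl (Or.inl ⟨hs, hn⟩)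
  have m2 : ∀ z, (⟨(r z).head, insert (f z) (r z).pos, (r z).neg⟩ : NRule α) ∈ P' := by
    intro z
    rw [hP']
    exact Or.inl (Or.inr ⟨z, rfl⟩)
  have m3 : ∀ z, ∀ d ∈ D z, (⟨some (f z), {d}, ∅⟩ : NRule α) ∈ P' := by
    intro z d hd
    rw [hP']
    exact Or.inr ⟨z, d, hd, rfl⟩
  have hf : ∀ K, ClosedUnder P' J K → ∀ z, ∀ d ∈ D z, d ∈ K → f z ∈ K := by
    intro K hK z d hd hdK
    refine hK _ (m3 z d hd) ?_ (f z) rfl ?_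
    · intro a ha
      simp at ha
    · simpa using hdK
  have L1 : ∀ K, ClosedUnder P' J K → ClosedUnder P (J ∩ A) (K ∩ A) := by
    intro K hK s hs hsr a ha hsK
    refine ⟨?_, hhead s hs a ha⟩
    have hsr' := (hred s hs).1 hsr
    by_cases hn : s ∈ Set.range r
    · obtain ⟨z, rfl⟩ := hn
      obtain ⟨d, hd1, hd2⟩ := hDpos z
      have hfz := hf K hK z d hd2 (hsK hd1).1
      refine hK _ (m2 z) hsr' a ha ?_
      intro x hx
      rcases Finset.mem_insert.1 (Finset.mem_coe.1 hx) with rfl | hx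
      · exact hfz
      · exact (hsK hx).1
    · exact hK s (m1 s hs hn) hsr' a ha (fun x hx => (hsK hx).1)
  have L2 : ∀ L, ClosedUnder P (J ∩ A) L →
      ClosedUnder P' J ((L ∩ A) ∪ {x | ∃ z, x = f z ∧ (L ∩ A ∩ D z).Nonempty}) := by
    intro L hL s hs hsr a ha hsL
    have key : ∀ x ∈ A, x ∈ ((L ∩ A) ∪ {x | ∃ z, x = f z ∧ (L ∩ A ∩ D z).Nonempty}) →
        x ∈ L := by
      rintro x hx (h | ⟨z, rfl, -⟩)
      · exact h.1
      · exact absurd hx (hfA z)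
    rw [hP'] at hs
    rcases hs with (⟨hs, -⟩ | ⟨z, rfl⟩) | ⟨z, d, hd, rfl⟩
    · exact Or.inl ⟨hL s hs ((hred s hs).2 hsr) a ha
        (fun x hx => key x (hpos s hs x hx) (hsL hx)), hhead s hs a ha⟩
    · refine Or.inl ⟨hL (r z) (hrP z) ((hred _ (hrP z)).2 hsr) a ha
        (fun x hx => key x (hpos _ (hrP z) x hx) (hsL ?_)), hhead _ (hrP z) a ha⟩
      exact Finset.mem_coe.2 (Finset.mem_insert_of_mem hx)
    · have hda := hDA z hd
      have hdL := key d hda (hsL (by simp))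
      exact Or.inr ⟨z, (Option.some.inj ha).symm, d, ⟨hdL, hda⟩, hd⟩
  have L3 : (∀ z, ∀ d ∈ D z, d ∈ J → f z ∈ J) →
      ((∃ s ∈ P', InReduct J s ∧ s.head = none ∧ ↑s.pos ⊆ J) ↔
        ∃ s ∈ P, InReduct (J ∩ A) s ∧ s.head = none ∧ ↑s.pos ⊆ J ∩ A) := by
    intro hfJ
    constructor
    · rintro ⟨s, hs, hsr, hh, hsJ⟩
      rw [hP'] at hs
      rcases hs with (⟨hs, -⟩ | ⟨z, rfl⟩) | ⟨z, d, hd, rfl⟩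
      · exact ⟨s, hs, (hred s hs).2 hsr, hh, fun x hx => ⟨hsJ hx, hpos s hs x hx⟩⟩
      · exact ⟨r z, hrP z, (hred _ (hrP z)).2 hsr, hh, fun x hx =>
          ⟨hsJ (Finset.mem_coe.2 (Finset.mem_insert_of_mem hx)), hpos _ (hrP z) x hx⟩⟩
      · simp at hh
    · rintro ⟨s, hs, hsr, hh, hsJ⟩
      have hsr' := (hred s hs).1 hsr
      by_cases hn : s ∈ Set.range r
      · obtain ⟨z, rfl⟩ := hn
        obtain ⟨d, hd1, hd2⟩ := hDpos z
        refine ⟨_, m2 z, hsr', hh, ?_⟩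
        intro x hx
        rcases Finset.mem_insert.1 (Finset.mem_coe.1 hx) with rfl | hx
        · exact hfJ z d hd2 (hsJ hd1).1
        · exact (hsJ hx).1
      · exact ⟨s, m1 s hs hn, hsr', hh, fun x hx => (hsJ hx).1⟩
  constructor
  · rintro ⟨⟨hc, hmin⟩, hcon⟩
    refine ⟨⟨⟨L1 J hc, ?_⟩, ?_⟩, ?_⟩
    · rintro L hL x ⟨hxJ, hxA⟩
      rcases hmin _ (L2 L hL) hxJ with h | ⟨z, rfl, -⟩
      · exact h.1
      · exact absurd hxA (hfA z)
    · rwa [← L3 (hf J hc)]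
    · intro z
      constructor
      · intro hz
        rcases hmin _ (L2 _ (L1 J hc)) hz with h | ⟨z', hzz, d, hd1, hd2⟩
        · exact absurd h.2 (hfA z)
        · obtain rfl := hfinj hzz
          exact ⟨d, hd1.1, hd2⟩
      · rintro ⟨d, hd1, hd2⟩
        exact hf J hc z d hd2 hd1.1
  · rintro ⟨⟨⟨hc, hmin⟩, hcon⟩, hfz⟩
    have hE : ((J ∩ A ∩ A) ∪ {x | ∃ z, x = f z ∧ (J ∩ A ∩ A ∩ D z).Nonempty}) = J := by
      ext x
      constructor
      · rintro (h | ⟨z, rfl, d, hd1, hd2⟩)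
        · exact h.1.1
        · exact (hfz z).2 ⟨d, hd1.1, hd2⟩
      · intro hx
        rcases hJ hx with h | ⟨z, rfl⟩
        · exact Or.inl ⟨⟨hx, h⟩, h⟩
        · obtain ⟨d, hd1, hd2⟩ := (hfz z).1 hx
          exact Or.inr ⟨z, rfl, d, ⟨hd1, hd1.2⟩, hd2⟩
    have hc' := L2 _ hc
    rw [hE] at hc'
    refine ⟨⟨hc', ?_⟩, ?_⟩
    · intro K hK x hx
      have hs := hmin _ (L1 K hK)
      rcases hJ hx with h | ⟨z, rfl⟩
      · exact (hs ⟨hx, h⟩).1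
      · obtain ⟨d, hd1, hd2⟩ := (hfz z).1 hx
        exact hf K hK z d hd2 (hs hd1).1
    · rwa [L3 (hf J hc')]
end

section
/- Let P be a normal program over a set A of propositional atoms, let B ⊆ A be a set of atoms such that no rule of P has its head in B, and let I_b ⊆ B. Let Q be the program obtained from P by deleting every rule r such that pos(r) ∩ (B \ I_b) ≠ ∅ or neg(r) ∩ I_b ≠ ∅, and by removing from the bodies of the remaining rules all positive body atoms in I_b and all negated body atoms in B \ I_b. Then for every I ⊆ A, I is an answer set of P ∪ I_b if and only if I is an answer set of Q ∪ I_b. (This is the simplification of rule bodies by the lower-level answer set used in the proof of the splitting-based replacement theorem.) -/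
theorem closed_facts_sub {α : Type*} {P : NProgram α} {S I J : Set α}
    (h : ClosedUnder (P ∪ facts S) I J) : S ⊆ J := by
  intro a ha
  exact h ⟨some a, ∅, ∅⟩ (Or.inr ⟨a, ha, rfl⟩) (by intro b hb; simp at hb) a rfl (by simp)

theorem closed_union {α : Type*} {P : NProgram α} {S I J : Set α}
    (h : ClosedUnder P I J) (hS : S ⊆ J) : ClosedUnder (P ∪ facts S) I J := by
  rintro r (hr | ⟨b, hb, rfl⟩) hred a ha hp
  · exact h r hr hred a ha hp
  · simp only [Option.some.injEq] at ha
    exact ha ▸ hS hb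

theorem closed_left {α : Type*} {P : NProgram α} {S I J : Set α}
    (h : ClosedUnder (P ∪ facts S) I J) : ClosedUnder P I J :=
  fun r hr => h r (Or.inl hr)

theorem answer_inter {α : Type*} {P : NProgram α} {B Ib I : Set α}
    (hB : ∀ r ∈ P, ∀ a : α, r.head = some a → a ∉ B)
    (h : IsAnswerSet (P ∪ facts Ib) I) : ∀ a ∈ B, a ∈ I ↔ a ∈ Ib := by
  have hs := closed_facts_sub h.1.1
  intro a haB
  refine ⟨fun haI => ?_, fun ha => hs ha⟩
  have hc : ClosedUnder (P ∪ facts Ib) I (I \ (B \ Ib)) := by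
    apply closed_union
    · intro r hr hred b hb hp
      exact ⟨h.1.1 r (Or.inl hr) hred b hb (fun x hx => (hp hx).1),
        fun hbB => hB r hr b hb hbB.1⟩
    · exact fun x hx => ⟨hs hx, fun hx' => hx'.2 hx⟩
  by_contra hn
  exact (h.1.2 _ hc haI).2 ⟨haB, hn⟩

/-- Transfer of answer sets between programs with the same applicable rules below `I`. -/
theorem answer_transfer {α : Type*} {P Q : NProgram α} {Ib I : Set α}
    (h1 : ∀ J ⊆ I, Ib ⊆ J → ∀ o, (∃ r ∈ P, InReduct I r ∧ r.head = o ∧ ↑r.pos ⊆ J) ↔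
      (∃ r ∈ Q, InReduct I r ∧ r.head = o ∧ ↑r.pos ⊆ J))
    (h : IsAnswerSet (P ∪ facts Ib) I) : IsAnswerSet (Q ∪ facts Ib) I := by
  have hs := closed_facts_sub h.1.1
  have hQI : ClosedUnder (Q ∪ facts Ib) I I := by
    apply closed_union _ hs
    intro r hr hred a ha hp
    obtain ⟨r', hr', hred', ha', hp'⟩ :=
      (h1 I subset_rfl hs (some a)).2 ⟨r, hr, hred, ha, hp⟩
    exact h.1.1 r' (Or.inl hr') hred' a ha' hp'
  refine ⟨⟨hQI, ?_⟩, ?_⟩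
  · intro J hJ
    have hsJ := closed_facts_sub hJ
    have hc : ClosedUnder (P ∪ facts Ib) I (J ∩ I) := by
      apply closed_union _ (Set.subset_inter hsJ hs)
      intro r hr hred a ha hp
      obtain ⟨r', hr', hred', ha', hp'⟩ :=
        (h1 (J ∩ I) Set.inter_subset_right (Set.subset_inter hsJ hs) (some a)).1
          ⟨r, hr, hred, ha, hp⟩
      exact ⟨hJ r' (Or.inl hr') hred' a ha' (fun x hx => (hp' hx).1),
        hQI r' (Or.inl hr') hred' a ha' (fun x hx => (hp' hx).2)⟩
    exact fun x hx => (h.1.2 _ hc hx).1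
  · rintro ⟨r, hr | ⟨b, hb, rfl⟩, hred, hh, hp⟩
    · obtain ⟨r', hr', hh'⟩ := (h1 I subset_rfl hs none).2 ⟨r, hr, hred, hh, hp⟩
      exact h.2 ⟨r', Or.inl hr', hh'⟩
    · simp at hh

/-- simplification by the lower-level answer set.  Let `B` be
a set of atoms containing no head of a rule of `P` and let `Ib ⊆ B`.  Let `Q`
be obtained from `P` by deleting every rule with a positive body atom in
`B \ Ib` or a negated body atom in `Ib`, and by removing from the remaining
rules all positive body atoms in `Ib` and all negated body atoms in `B \ Ib`.
Then for every `I`, `I` is an answer set of `P ∪ Ib` iff `I` is an answer set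
of `Q ∪ Ib` (with `Ib` viewed as a set of facts). -/
theorem simplification_answerSets {α : Type*} (P : NProgram α) (B Ib : Set α)
    (hB : ∀ r ∈ P, ∀ a : α, r.head = some a → a ∉ B) (hIb : Ib ⊆ B)
    (Q : NProgram α)
    (hQ : Q = {r' | ∃ r ∈ P,
      ↑r.pos ∩ (B \ Ib) = (∅ : Set α) ∧ ↑r.neg ∩ Ib = (∅ : Set α) ∧
      r'.head = r.head ∧ ↑r'.pos = ↑r.pos \ Ib ∧ ↑r'.neg = ↑r.neg \ (B \ Ib)}) :
    ∀ I : Set α, IsAnswerSet (P ∪ facts Ib) I ↔ IsAnswerSet (Q ∪ facts Ib) I := by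
  classical
  have hBQ : ∀ r ∈ Q, ∀ a : α, r.head = some a → a ∉ B := by
    subst hQ
    rintro r' ⟨r, hr, -, -, hh, -, -⟩ a ha
    exact hB r hr a (hh ▸ ha)
  have key : ∀ I : Set α, (∀ a ∈ B, a ∈ I ↔ a ∈ Ib) → ∀ J ⊆ I, Ib ⊆ J → ∀ o,
      (∃ r ∈ P, InReduct I r ∧ r.head = o ∧ ↑r.pos ⊆ J) ↔
      (∃ r ∈ Q, InReduct I r ∧ r.head = o ∧ ↑r.pos ⊆ J) := by
    intro I hI J hJI hJ o
    subst hQ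
    constructor
    · rintro ⟨r, hr, hred, hh, hp⟩
      refine ⟨⟨r.head, r.pos.filter (· ∉ Ib), r.neg.filter (· ∉ B \ Ib)⟩,
        ⟨r, hr, ?_, ?_, rfl, ?_, ?_⟩, ?_, hh, ?_⟩
      · ext x
        simp only [Set.mem_inter_iff, Set.mem_empty_iff_false, iff_false]
        rintro ⟨hx, hxB, hxn⟩
        exact hxn ((hI x hxB).1 (hJI (hp hx)))
      · ext x
        simp only [Set.mem_inter_iff, Set.mem_empty_iff_false, iff_false]
        rintro ⟨hx, hxI⟩
        exact hred x hx (hJI (hJ hxI))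
      · ext x; simp
      · ext x; simp
      · intro x hx
        exact hred x (Finset.mem_filter.1 hx).1
      · intro x hx
        exact hp (Finset.mem_filter.1 hx).1
    · rintro ⟨r', ⟨r, hr, hpos, hneg, hh', hp', hn'⟩, hred, hh, hp⟩
      refine ⟨r, hr, ?_, hh' ▸ hh, ?_⟩
      · intro x hx hxI
        by_cases hxB : x ∈ B \ Ib
        · exact hxB.2 ((hI x hxB.1).1 hxI)
        · have : x ∈ (↑r'.neg : Set α) := hn' ▸ ⟨hx, hxB⟩
          exact hred x this hxI
      · intro x hx
        by_cases hxI : x ∈ Ib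
        · exact hJ hxI
        · have : x ∈ (↑r'.pos : Set α) := hp' ▸ ⟨hx, hxI⟩
          exact hp this
  intro I
  constructor
  · intro h
    exact answer_transfer (key I (answer_inter hB h)) h
  · intro h
    exact answer_transfer
      (fun J hJ hs o => (key I (answer_inter hBQ h) J hJ hs o).symm) h
end

section
/- Let P_b, P_t, and P_t′ be normal programs over a set A of propositional atoms such that (P_b, P_t) is a splitting of P = P_b ∪ P_t and (P_b, P_t′) is a splitting of P′ = P_b ∪ P_t′. Suppose that for every answer set I_b of P_b, the programs P_t ∪ I_b and P_t′ ∪ I_b have the same answer sets. Then P and P′ have the same answer sets. (This is the splitting-based replacement principle that justifies replacing, in the top part of a split program, an aggregate expression built entirely from atoms of the bottom part by any classically equivalent form.) -/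
theorem split_aux {α : Type*} (Pb Pt : NProgram α) (hs : IsSplitting Pb Pt)
    (U : Set α) (hU : U = {a | ∃ r ∈ Pb, a ∈ r.atoms}) (I : Set α) :
    IsAnswerSet (Pb ∪ Pt) I ↔
      IsAnswerSet Pb (I ∩ U) ∧ IsAnswerSet (Pt ∪ facts (I ∩ U)) I := by
  have hh : ∀ r ∈ Pb, ∀ a, r.head = some a → a ∈ U := by
    intro r hr a ha
    rw [hU]
    exact ⟨r, hr, Or.inl (Or.inl ha)⟩
  have hp : ∀ r ∈ Pb, (↑r.pos : Set α) ⊆ U := by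
    intro r hr a ha
    rw [hU]
    exact ⟨r, hr, Or.inl (Or.inr ha)⟩
  have hred : ∀ r ∈ Pb, (InReduct (I ∩ U) r ↔ InReduct I r) := by
    intro r hr
    have hn : ∀ a ∈ r.neg, a ∈ U := by
      intro a ha
      rw [hU]
      exact ⟨r, hr, Or.inr ha⟩
    exact ⟨fun h a ha hI => h a ha ⟨hI, hn a ha⟩, fun h a ha hI => h a ha hI.1⟩
  have ht : ∀ r ∈ Pt, ∀ a, r.head = some a → a ∉ U := by
    intro r hr a ha haU
    rw [hU] at haU
    exact hs a haU ⟨r, hr, ha⟩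
  constructor
  · rintro ⟨⟨hc, hm⟩, hk⟩
    refine ⟨⟨⟨?_, ?_⟩, ?_⟩, ⟨⟨?_, ?_⟩, ?_⟩⟩
    · intro r hr hi a ha hpos
      exact ⟨hc r (Or.inl hr) ((hred r hr).1 hi) a ha (fun x hx => (hpos hx).1), hh r hr a ha⟩
    · intro J hJ x hx
      refine hm {x | x ∈ U → x ∈ J} ?_ hx.1 hx.2
      rintro r (hr | hr) hi a ha hpos haU
      · exact hJ r hr ((hred r hr).2 hi) a ha (fun y hy => hpos hy (hp r hr hy))
      · exact absurd haU (ht r hr a ha)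
    · rintro ⟨r, hr, hi, hn, hpos⟩
      exact hk ⟨r, Or.inl hr, (hred r hr).1 hi, hn, fun x hx => (hpos hx).1⟩
    · rintro r (hr | ⟨b, hb, rfl⟩) hi a ha hpos
      · exact hc r (Or.inr hr) hi a ha hpos
      · cases ha
        exact hb.1
    · intro J hJ x hx
      refine (hm (J ∩ I) ?_ hx).1
      rintro r (hr | hr) hi a ha hpos
      · have haI : a ∈ I := hc r (Or.inl hr) hi a ha (fun y hy => (hpos hy).2)
        exact ⟨hJ ⟨some a, ∅, ∅⟩ (Or.inr ⟨a, ⟨haI, hh r hr a ha⟩, rfl⟩)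
          (by intro b hb; simp at hb) a rfl (by simp), haI⟩
      · exact ⟨hJ r (Or.inl hr) hi a ha (fun y hy => (hpos hy).1),
          hc r (Or.inr hr) hi a ha (fun y hy => (hpos hy).2)⟩
    · rintro ⟨r, hr | ⟨b, hb, rfl⟩, hi, hn, hpos⟩
      · exact hk ⟨r, Or.inr hr, hi, hn, hpos⟩
      · cases hn
  · rintro ⟨⟨⟨hc, hm⟩, hk⟩, ⟨⟨hc', hm'⟩, hk'⟩⟩
    refine ⟨⟨?_, ?_⟩, ?_⟩
    · rintro r (hr | hr) hi a ha hpos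
      · exact (hc r hr ((hred r hr).2 hi) a ha (fun x hx => ⟨hpos hx, hp r hr hx⟩)).1
      · exact hc' r (Or.inl hr) hi a ha hpos
    · intro J hJ
      have h1 : I ∩ U ⊆ J := hm J (fun r hr hi a ha hpos =>
        hJ r (Or.inl hr) ((hred r hr).1 hi) a ha hpos)
      apply hm'
      rintro r (hr | ⟨b, hb, rfl⟩) hi a ha hpos
      · exact hJ r (Or.inr hr) hi a ha hpos
      · cases ha
        exact h1 hb
    · rintro ⟨r, hr | hr, hi, hn, hpos⟩
      · exact hk ⟨r, hr, (hred r hr).2 hi, hn, fun x hx => ⟨hpos hx, hp r hr hx⟩⟩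
      · exact hk' ⟨r, Or.inl hr, hi, hn, hpos⟩

/-- splitting-based replacement principle.  Suppose
`(Pb, Pt)` is a splitting of `P = Pb ∪ Pt` and `(Pb, Pt')` is a splitting of
`P' = Pb ∪ Pt'`.  If for every answer set `Ib` of `Pb` the programs `Pt ∪ Ib`
and `Pt' ∪ Ib` have the same answer sets, then `P` and `P'` have the same
answer sets. -/
theorem splitting_replacement {α : Type*} (Pb Pt Pt' P P' : NProgram α)
    (hP : P = Pb ∪ Pt) (hP' : P' = Pb ∪ Pt')
    (hsplit : IsSplitting Pb Pt) (hsplit' : IsSplitting Pb Pt')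
    (htop : ∀ Ib : Set α, IsAnswerSet Pb Ib →
      ∀ J : Set α, IsAnswerSet (Pt ∪ facts Ib) J ↔ IsAnswerSet (Pt' ∪ facts Ib) J) :
    ∀ I : Set α, IsAnswerSet P I ↔ IsAnswerSet P' I := by
  intro I
  rw [hP, hP', split_aux Pb Pt hsplit _ rfl I, split_aux Pb Pt' hsplit' _ rfl I]
  exact and_congr_right fun h => htop _ h I
end

section
/- Let A be a set of propositional atoms, S ⊆ A, b a natural number, H ∈ A ∪ {⊥}, and B⁺, B⁻ finite subsets of A. Let P₁ be the c-program consisting of all c-rules with head H, positive body T ∪ B⁺, negated body B⁻, and no cardinality constraints, where T ranges over all b-element subsets of S; and let P₂ be the c-program consisting of the single c-rule with head H, positive body B⁺, negated body B⁻, and the single cardinality constraint (S, b). Then P₁ and P₂ are strongly equivalent: for every c-program R over A, the programs P₁ ∪ R and P₂ ∪ R have the same answer sets. (This is the ground-level form of the theorem that a rule naming b pairwise distinct objects X₁,…,X_b satisfying F, together with the inequations Xᵢ ≠ Xⱼ, is strongly equivalent to the rule using the aggregate literal b ≤ #count{X : F(X)}.) -/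
/-- A rule of a c-program: a head (`none` represents `⊥`), finite sets of
positive and negated body atoms, and a finite set of cardinality constraints,
each a pair `(S, b)` with `S` a set of atoms and `b : ℕ`.  The type `α` is the
set of propositional atoms. -/
structure CRule (α : Type*) where
  head : Option α
  pos : Finset α
  neg : Finset α
  agg : Finset (Set α × ℕ)

/-- A c-program is a set of c-rules. -/
abbrev CProgram (α : Type*) := Set (CRule α)

/-- A cardinality constraint `(S, b)` is satisfied by `J` if `J ∩ S` has at
least `b` elements. -/
def SatConstraint {α : Type*} (J : Set α) (c : Set α × ℕ) : Prop :=
  ∃ T : Finset α, ↑T ⊆ J ∩ c.1 ∧ c.2 ≤ T.card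

/-- A c-rule fires on `J` if its positive body is contained in `J` and every
one of its cardinality constraints is satisfied by `J`. -/
def CRule.Fires {α : Type*} (r : CRule α) (J : Set α) : Prop :=
  ↑r.pos ⊆ J ∧ ∀ c ∈ r.agg, SatConstraint J c

/-- A c-rule survives into (and is kept, with its negated body removed but its
positive body and cardinality constraints kept, in) the reduct `P^I` iff its
negated body is disjoint from `I`. -/
def CInReduct {α : Type*} (I : Set α) (r : CRule α) : Prop :=
  ∀ a ∈ r.neg, a ∉ I

/-- `J` is closed under the atom-headed rules of the reduct `P^I`: whenever
such a rule fires on `J`, its head atom is in `J`. -/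
def CClosedUnder {α : Type*} (P : CProgram α) (I J : Set α) : Prop :=
  ∀ r ∈ P, CInReduct I r → ∀ a : α, r.head = some a → r.Fires J → a ∈ J

/-- `I` is an answer set of the c-program `P`: (i) `I` is the least set closed
under the atom-headed rules of the reduct `P^I`, and (ii) no `⊥`-headed rule
of the reduct `P^I` fires on `I`. -/
def CIsAnswerSet {α : Type*} (P : CProgram α) (I : Set α) : Prop :=
  (CClosedUnder P I I ∧ ∀ J : Set α, CClosedUnder P I J → I ⊆ J) ∧
    ¬ ∃ r ∈ P, CInReduct I r ∧ r.head = none ∧ r.Fires I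

theorem answer_congr_aux {α : Type*} (P Q : CProgram α)
    (h : ∀ (I J : Set α) (o : Option α),
      (∃ r ∈ P, CInReduct I r ∧ r.head = o ∧ r.Fires J) ↔
      (∃ r ∈ Q, CInReduct I r ∧ r.head = o ∧ r.Fires J)) (R : CProgram α) (I : Set α)
    (hA : CIsAnswerSet (P ∪ R) I) : CIsAnswerSet (Q ∪ R) I := by
  have key : ∀ (P Q : CProgram α), (∀ (I J : Set α) (o : Option α),
      (∃ r ∈ P, CInReduct I r ∧ r.head = o ∧ r.Fires J) →
      (∃ r ∈ Q, CInReduct I r ∧ r.head = o ∧ r.Fires J)) → ∀ J : Set α,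
      CClosedUnder (Q ∪ R) I J → CClosedUnder (P ∪ R) I J := by
    intro P Q h J hc r hr hi a ha hf
    rcases hr with hr | hr
    · obtain ⟨r', h1, h2, h3, h4⟩ := h I J (some a) ⟨r, hr, hi, ha, hf⟩
      exact hc r' (Or.inl h1) h2 a h3 h4
    · exact hc r (Or.inr hr) hi a ha hf
  obtain ⟨⟨h1, h2⟩, h3⟩ := hA
  refine ⟨⟨key Q P (fun I J o => (h I J o).2) I h1,
    fun J hJ => h2 J (key P Q (fun I J o => (h I J o).1) J hJ)⟩, ?_⟩
  rintro ⟨r, hr | hr, hi, hn, hf⟩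
  · obtain ⟨r', g1, g2, g3, g4⟩ := (h I I none).2 ⟨r, hr, hi, hn, hf⟩
    exact h3 ⟨r', Or.inl g1, g2, g3, g4⟩
  · exact h3 ⟨r, Or.inr hr, hi, hn, hf⟩

/-- strong equivalence of explicit counting and the counting
aggregate, ground level.  Let `P₁` consist of all c-rules with head `H`,
positive body `T ∪ B⁺`, negated body `B⁻` and no cardinality constraints,
where `T` ranges over all `b`-element subsets of `S`; and let `P₂` consist of
the single c-rule with head `H`, positive body `B⁺`, negated body `B⁻` and the
single cardinality constraint `(S, b)`.  Then `P₁` and `P₂` are strongly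
equivalent: for every c-program `R`, `P₁ ∪ R` and `P₂ ∪ R` have the same
answer sets. -/
theorem counting_aggregate_strong_equivalence {α : Type*} [DecidableEq α]
    (S : Set α) (b : ℕ) (H : Option α) (Bp Bn : Finset α)
    (P₁ P₂ : CProgram α)
    (hP₁ : P₁ = {r | ∃ T : Finset α, ↑T ⊆ S ∧ T.card = b ∧
      r = ⟨H, T ∪ Bp, Bn, ∅⟩})
    (hP₂ : P₂ = {(⟨H, Bp, Bn, {(S, b)}⟩ : CRule α)}) :
    ∀ R : CProgram α, ∀ I : Set α,
      CIsAnswerSet (P₁ ∪ R) I ↔ CIsAnswerSet (P₂ ∪ R) I := by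
  have h : ∀ (I J : Set α) (o : Option α),
      (∃ r ∈ P₁, CInReduct I r ∧ r.head = o ∧ r.Fires J) ↔
      (∃ r ∈ P₂, CInReduct I r ∧ r.head = o ∧ r.Fires J) := by
    subst hP₁ hP₂
    intro I J o
    constructor
    · rintro ⟨r, ⟨T, hT, hc, rfl⟩, hi, ho, hp, -⟩
      refine ⟨_, rfl, hi, ho, fun x hx => hp ?_, ?_⟩
      · simpa using Or.inr hx
      · intro c hcc
        obtain rfl := Finset.mem_singleton.1 hcc
        exact ⟨T, fun x hx => ⟨hp (by simpa using Or.inl hx), hT hx⟩, hc.ge⟩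
    · rintro ⟨r, rfl, hi, ho, hp, ha⟩
      obtain ⟨T, hT, hc⟩ := ha (S, b) (Finset.mem_singleton_self _)
      obtain ⟨U, hU, hUc⟩ := Finset.exists_subset_card_eq hc
      refine ⟨_, ⟨U, fun x hx => (hT (hU hx)).2, hUc, rfl⟩, hi, ho, ?_, ?_⟩
      · intro x hx
        rcases Finset.mem_union.1 hx with hx | hx
        · exact (hT (hU hx)).1
        · exact hp hx
      · intro c hcc
        exact absurd hcc (Finset.notMem_empty c)
  intro R I
  exact ⟨answer_congr_aux P₁ P₂ h R I,
    answer_congr_aux P₂ P₁ (fun I J o => (h I J o).symm) R I⟩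
end

section
/- Let P be a c-program over a set A of propositional atoms none of whose rules has a cardinality constraint (so P is a normal program), let Z be an index set, and for each z ∈ Z let S_z ⊆ A, let H_z ∈ A ∪ {⊥}, let B⁺_z and B⁻_z be finite subsets of A, and let b ≥ 2. Suppose that for each z ∈ Z, P contains exactly the rules with head H_z, positive body T ∪ B⁺_z, and negated body B⁻_z for every b-element subset T of S_z, together with some further rules not of this form. Let (f_z)_{z∈Z} be pairwise distinct fresh atoms not in A, and let P″ be the c-program over A ∪ {f_z : z ∈ Z} obtained from P by replacing, for each z ∈ Z, all the rules of the above family by the single c-rule with head H_z, positive body B⁺_z ∪ {f_z}, negated body B⁻_z, and cardinality constraint (S_z, b), and by adding the rules f_z ← s for every s ∈ S_z. Then a set J ⊆ A ∪ {f_z : z ∈ Z} is an answer set of P″ if and only if J ∩ A is an answer set of P and, for each z ∈ Z, f_z ∈ J exactly when (J ∩ A) ∩ S_z ≠ ∅; in particular, P and P″ have the same answer sets modulo the atoms f_z. (This is the ground-level form of the main rewriting theorem combining projection with the introduction of the counting aggregate.) -/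
/-- The atoms occurring (in the head or body, or in a cardinality constraint)
of a c-rule. -/
def CRule.atoms {α : Type*} (r : CRule α) : Set α :=
  {a | r.head = some a} ∪ ↑r.pos ∪ ↑r.neg ∪ ⋃ c ∈ r.agg, c.1

/-- main rewriting theorem, ground level: projection combined
with the introduction of the counting aggregate.  Let `P` be a normal program
(a c-program with no cardinality constraints) over `A`, and suppose that for
each `z`, `P` contains exactly the family of rules with head `H z`, positive
body `T ∪ Bp z` and negated body `Bn z`, for every `b`-element subset `T` of
`S z` (`b ≥ 2`), together with further rules not of this form.  Let `f z` be
pairwise distinct fresh atoms not in `A`, and let `P''` be obtained from `P`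
by replacing, for each `z`, all rules of that family by the single c-rule with
head `H z`, positive body `Bp z ∪ {f z}`, negated body `Bn z` and cardinality
constraint `(S z, b)`, and adding the rule `f z ← s` for every `s ∈ S z`.
Then `J ⊆ A ∪ {f z : z}` is an answer set of `P''` iff `J ∩ A` is an answer
set of `P` and, for each `z`, `f z ∈ J` exactly when `(J ∩ A) ∩ S z ≠ ∅`. -/
theorem aggregate_projection_rewriting_answerSets {α Z : Type*} [DecidableEq α]
    (A : Set α) (P : CProgram α)
    (hnormal : ∀ r ∈ P, r.agg = ∅)
    (hPA : ∀ r ∈ P, r.atoms ⊆ A)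
    (b : ℕ) (hb : 2 ≤ b)
    (S : Z → Set α) (hSA : ∀ z, S z ⊆ A)
    (H : Z → Option α) (hHA : ∀ z, ∀ a : α, H z = some a → a ∈ A)
    (Bp Bn : Z → Finset α) (hBpA : ∀ z, ↑(Bp z) ⊆ A) (hBnA : ∀ z, ↑(Bn z) ⊆ A)
    (Fam : Z → CProgram α)
    (hFam : ∀ z, Fam z = {r | ∃ T : Finset α, ↑T ⊆ S z ∧ T.card = b ∧
      r = ⟨H z, T ∪ Bp z, Bn z, ∅⟩})
    (hFamP : ∀ z, Fam z ⊆ P)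
    (f : Z → α) (hfinj : Function.Injective f) (hfA : ∀ z, f z ∉ A)
    (P'' : CProgram α)
    (hP'' : P'' =
      (P \ ⋃ z, Fam z)
        ∪ Set.range (fun z =>
            (⟨H z, insert (f z) (Bp z), Bn z, {(S z, b)}⟩ : CRule α))
        ∪ {r | ∃ z, ∃ s ∈ S z, r = ⟨some (f z), {s}, ∅, ∅⟩}) :
    ∀ J ⊆ A ∪ Set.range f,
      (CIsAnswerSet P'' J ↔
        CIsAnswerSet P (J ∩ A) ∧ ∀ z, (f z ∈ J ↔ (J ∩ A ∩ S z).Nonempty)) := by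
  intro J hJ
  have hne : ∀ (z : Z) (a : α), a ∈ A → f z ≠ a := fun z a ha h => hfA z (h ▸ ha)
  have posA : ∀ r ∈ P, ∀ a ∈ r.pos, a ∈ A := fun r hr a ha =>
    hPA r hr (Or.inl (Or.inl (Or.inr ha)))
  have negA : ∀ r ∈ P, ∀ a ∈ r.neg, a ∈ A := fun r hr a ha =>
    hPA r hr (Or.inl (Or.inr ha))
  have headA : ∀ r ∈ P, ∀ a, r.head = some a → a ∈ A := fun r hr a ha =>
    hPA r hr (Or.inl (Or.inl (Or.inl ha)))
  -- lifting
  have L1 : ∀ (X : Set α), (∀ z, (X ∩ S z).Nonempty → f z ∈ X) →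
      ∀ r ∈ P, CInReduct (J ∩ A) r → r.Fires (X ∩ A) →
        ∃ r' ∈ P'', CInReduct J r' ∧ r'.head = r.head ∧ r'.Fires X := by
    intro X hX r hr hred hfire
    have hred' : CInReduct J r := fun a ha haJ => hred a ha ⟨haJ, negA r hr a ha⟩
    by_cases hF : r ∈ ⋃ z, Fam z
    · obtain ⟨z, hz⟩ := Set.mem_iUnion.1 hF
      rw [hFam z] at hz
      obtain ⟨T, hTS, hTb, rfl⟩ := hz
      have hTX : ∀ a ∈ T, a ∈ X := fun a ha =>
        (hfire.1 (Finset.mem_coe.2 (Finset.mem_union_left _ ha))).1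
      have hBX : ∀ a ∈ Bp z, a ∈ X := fun a ha =>
        (hfire.1 (Finset.mem_coe.2 (Finset.mem_union_right _ ha))).1
      have hfz : f z ∈ X := by
        have : T.Nonempty := Finset.card_pos.1 (by omega)
        obtain ⟨t, ht⟩ := this
        exact hX z ⟨t, hTX t ht, hTS ht⟩
      refine ⟨⟨H z, insert (f z) (Bp z), Bn z, {(S z, b)}⟩, ?_, hred', rfl, ?_, ?_⟩
      · rw [hP'']
        exact Or.inl (Or.inr ⟨z, rfl⟩)
      · intro a ha
        rcases Finset.mem_insert.1 (Finset.mem_coe.1 ha) with rfl | h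
        · exact hfz
        · exact hBX a h
      · intro c hc
        rw [Finset.mem_singleton.1 hc]
        exact ⟨T, fun a ha => ⟨hTX a ha, hTS ha⟩, hTb.ge⟩
    · refine ⟨r, ?_, hred', rfl, fun a ha => (hfire.1 ha).1, ?_⟩
      · rw [hP'']
        exact Or.inl (Or.inl ⟨hr, hF⟩)
      · rw [hnormal r hr]
        intro c hc
        simp at hc
  -- projecting
  have L2 : ∀ (X : Set α), ∀ r ∈ P'', CInReduct J r → r.Fires X →
      (∃ z, r.head = some (f z) ∧ (X ∩ S z).Nonempty) ∨
      ∃ r' ∈ P, CInReduct (J ∩ A) r' ∧ r'.head = r.head ∧ r'.Fires (X ∩ A) := by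
    intro X r hr hred hfire
    rw [hP''] at hr
    rcases hr with (⟨hr, -⟩ | ⟨z, rfl⟩) | ⟨z, s, hs, rfl⟩
    · refine Or.inr ⟨r, hr, fun a ha haJ => hred a ha haJ.1, rfl,
        fun a ha => ⟨hfire.1 ha, posA r hr a ha⟩, ?_⟩
      rw [hnormal r hr]
      intro c hc
      simp at hc
    · obtain ⟨T, hT, hTb⟩ := hfire.2 (S z, b) (Finset.mem_singleton_self _)
      obtain ⟨T', hT', hTb'⟩ := Finset.exists_subset_card_eq hTb
      refine Or.inr ⟨⟨H z, T' ∪ Bp z, Bn z, ∅⟩, ?_, fun a ha haJ => hred a ha haJ.1, rfl, ?_, ?_⟩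
      · apply hFamP z
        rw [hFam z]
        exact ⟨T', fun a ha => (hT (hT' ha)).2, hTb', rfl⟩
      · intro a ha
        rcases Finset.mem_union.1 (Finset.mem_coe.1 ha) with h | h
        · exact ⟨(hT (hT' h)).1, hSA z (hT (hT' h)).2⟩
        · exact ⟨hfire.1 (Finset.mem_coe.2 (Finset.mem_insert_of_mem h)), hBpA z h⟩
      · intro c hc
        simp at hc
    · exact Or.inl ⟨z, rfl, s, hfire.1 (Finset.mem_coe.2 (Finset.mem_singleton_self s)), hs⟩
  -- closed sets contain the projection atoms
  have L3 : ∀ X, CClosedUnder P'' J X → ∀ z, (X ∩ S z).Nonempty → f z ∈ X := by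
    rintro X hX z ⟨s, hsX, hs⟩
    refine hX ⟨some (f z), {s}, ∅, ∅⟩ ?_ ?_ _ rfl ⟨?_, ?_⟩
    · rw [hP'']
      exact Or.inr ⟨z, s, hs, rfl⟩
    · intro a ha
      simp at ha
    · intro a ha
      rw [Finset.mem_singleton.1 (Finset.mem_coe.1 ha)]
      exact hsX
    · intro c hc
      simp at hc
  have C1 : ∀ X, CClosedUnder P'' J X → CClosedUnder P (J ∩ A) (X ∩ A) := by
    intro X hX r hr hred a ha hfire
    obtain ⟨r', hr', hred', hh, hf'⟩ := L1 X (L3 X hX) r hr hred hfire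
    exact ⟨hX r' hr' hred' a (hh.trans ha) hf', headA r hr a ha⟩
  have C2 : ∀ X, CClosedUnder P (J ∩ A) (X ∩ A) → (∀ z, (X ∩ S z).Nonempty → f z ∈ X) →
      CClosedUnder P'' J X := by
    intro X hX hXf r hr hred a ha hfire
    rcases L2 X r hr hred hfire with ⟨z, hz, hn⟩ | ⟨r', hr', hred', hh, hf'⟩
    · rw [ha] at hz
      rw [Option.some.inj hz]
      exact hXf z hn
    · exact (hX r' hr' hred' a (hh.trans ha) hf').1
  have C3 : ∀ Y, CClosedUnder P (J ∩ A) Y →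
      CClosedUnder P'' J ((Y ∩ A) ∪ {x | ∃ z, x = f z ∧ (Y ∩ A ∩ S z).Nonempty}) := by
    intro Y hY
    have hE : ∀ a ∈ A, a ∈ ((Y ∩ A) ∪ {x | ∃ z, x = f z ∧ (Y ∩ A ∩ S z).Nonempty}) →
        a ∈ Y := by
      rintro a haA (h | ⟨z, h, -⟩)
      · exact h.1
      · exact absurd h.symm (hne z a haA)
    apply C2
    · intro r hr hred a ha hfire
      refine ⟨Or.inl ⟨hY r hr hred a ha ⟨fun x hx => ?_, ?_⟩, headA r hr a ha⟩, headA r hr a ha⟩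
      · exact hE x (hfire.1 hx).2 (hfire.1 hx).1
      · rw [hnormal r hr]
        intro c hc
        simp at hc
    · rintro z ⟨s, hs, hsS⟩
      exact Or.inr ⟨z, rfl, s, ⟨hE s (hSA z hsS) hs, hSA z hsS⟩, hsS⟩
  constructor
  · rintro ⟨⟨hcl, hmin⟩, hbot⟩
    refine ⟨⟨⟨C1 J hcl, fun Y hY a ha => ?_⟩, ?_⟩, fun z => ⟨fun hz => ?_, ?_⟩⟩
    · rcases hmin _ (C3 Y hY) ha.1 with h | ⟨z, h, -⟩
      · exact h.1
      · exact absurd h.symm (hne z a ha.2)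
    · rintro ⟨r, hr, hred, hh, hfire⟩
      obtain ⟨r', hr', hred', hh', hf'⟩ := L1 J (L3 J hcl) r hr hred hfire
      exact hbot ⟨r', hr', hred', hh'.trans hh, hf'⟩
    · rcases hmin _ (C3 _ (C1 J hcl)) hz with h | ⟨z', h, s, hs, hsS⟩
      · exact absurd h.2 (hfA z)
      · cases hfinj h
        exact ⟨s, hs.1, hsS⟩
    · rintro ⟨s, hs, hsS⟩
      exact L3 J hcl z ⟨s, hs.1, hsS⟩
  · rintro ⟨⟨⟨hcl, hmin⟩, hbot⟩, hf⟩
    refine ⟨⟨C2 J hcl ?_, fun X hX a ha => ?_⟩, ?_⟩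
    · rintro z ⟨s, hs, hsS⟩
      exact (hf z).2 ⟨s, ⟨hs, hSA z hsS⟩, hsS⟩
    · have hsub := hmin _ (C1 X hX)
      rcases hJ ha with h | ⟨z, rfl⟩
      · exact (hsub ⟨ha, h⟩).1
      · obtain ⟨s, hs, hsS⟩ := (hf z).1 ha
        exact L3 X hX z ⟨s, (hsub hs).1, hsS⟩
    · rintro ⟨r, hr, hred, hh, hfire⟩
      rcases L2 J r hr hred hfire with ⟨z, hz, -⟩ | ⟨r', hr', hred', hh', hf'⟩
      · rw [hh] at hz
        cases hz
      · exact hbot ⟨r', hr', hred', hh'.trans hh, hf'⟩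
end
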